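/- (Summability of the bad-set volumes under convergence of the integral) Let ψ = (ψ_p)_{p∈S} be a collection of approximating functions and assume ∫_{ℚ_S^n} ∏_{p∈S} ψ_p(‖y‖_p^n) dy < ∞. For each nonzero q ∈ ℤ_S^n define 𝒜_q ⊆ Mat_{m,n}([0,1) × ∏_{p∈S_f} ℤ_p) as the set of A = (A_p)_{p∈S} for which there exists p⃗ ∈ ℤ_S^m with ‖A_p q + p⃗‖_p^m ≤ ψ_p(‖q‖_p^n) for all p ∈ S. Then ∑_{q ∈ ℤ_S^n ∖ {0}} vol(𝒜_q) < ∞, where vol is the restriction of the Haar measure on Mat_{m,n}(ℚ_S) to Mat_{m,n}([0,1) × ∏_{p∈S_f} ℤ_p). -/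

import Mathlib

open MeasureTheory Matrix

noncomputable section

/-- `z` belongs to the ring of `S`-integers `ℤ_S = ℤ[1/P]`,
where `P` is the product of the finite primes in `S`. -/
def IsZS (P : ℕ) (z : ℚ) : Prop := ∃ (a : ℤ) (k : ℕ), z = (a : ℚ) / (P : ℚ) ^ k

/-- A collection of approximating functions `ψ = (ψ_p)_{p ∈ S}`:
each `ψ_p : ℝ_{>0} → ℝ_{>0}` is non-increasing and `≡ 1` on `(0,1]`
(we extend by `1` on `t ≤ 1`); moreover for each finite place `p`,
`ψ_p` is constant on `{p^{kn}, …, p^{kn+n-1}}` for every `k ∈ ℤ` and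
takes values in `p^{mℤ}` on `p^ℤ`. -/
structure ApproxFamily (m n s : ℕ) (p : Fin s → ℕ) : Type where
  psiR : ℝ → ℝ
  psiP : Fin s → ℝ → ℝ
  posR : ∀ t, 0 < psiR t
  antiR : ∀ ⦃t₁ t₂ : ℝ⦄, 0 < t₁ → t₁ ≤ t₂ → psiR t₂ ≤ psiR t₁
  oneR : ∀ ⦃t : ℝ⦄, t ≤ 1 → psiR t = 1
  posP : ∀ i t, 0 < psiP i t
  antiP : ∀ i ⦃t₁ t₂ : ℝ⦄, 0 < t₁ → t₁ ≤ t₂ → psiP i t₂ ≤ psiP i t₁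
  oneP : ∀ i ⦃t : ℝ⦄, t ≤ 1 → psiP i t = 1
  constP : ∀ i (k : ℤ) (j : ℕ), j < n →
    psiP i ((p i : ℝ) ^ (k * n + j : ℤ)) = psiP i ((p i : ℝ) ^ (k * n : ℤ))
  valsP : ∀ i (k : ℤ), ∃ l : ℤ, psiP i ((p i : ℝ) ^ k) = (p i : ℝ) ^ (m * l : ℤ)

/-- The real components of the diagonal embedding of a rational vector. -/
def ratR {k : ℕ} (q : Fin k → ℚ) : Fin k → ℝ := fun j => (q j : ℝ)

/-- The `p i`-adic components of the diagonal embedding of a rational vector. -/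
def ratP {s : ℕ} (p : Fin s → ℕ) [∀ i, Fact (p i).Prime] {k : ℕ} (i : Fin s)
    (q : Fin k → ℚ) : Fin k → ℚ_[p i] := fun j => (q j : ℚ_[p i])

/-- The region `E_f(T) ⊆ ℚ_S^m × ℚ_S^n` cut out by `‖x‖_p^m ≤ f_p(‖y‖_p^n)` and
`‖y‖_p^n ≤ T_p` for all `p ∈ S` (product coordinates). -/
def Eprod (m n : ℕ) {s : ℕ} (p : Fin s → ℕ) [∀ i, Fact (p i).Prime]
    (fR : ℝ → ℝ) (fP : Fin s → ℝ → ℝ) (TR : ℝ) (TP : Fin s → ℝ) :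
    Set (((Fin m → ℝ) × ∀ i, Fin m → ℚ_[p i]) × ((Fin n → ℝ) × ∀ i, Fin n → ℚ_[p i])) :=
  {xy | ‖xy.1.1‖ ^ m ≤ fR (‖xy.2.1‖ ^ n) ∧ ‖xy.2.1‖ ^ n ≤ TR ∧
      ∀ i, ‖xy.1.2 i‖ ^ m ≤ fP i (‖xy.2.2 i‖ ^ n) ∧ ‖xy.2.2 i‖ ^ n ≤ TP i}

/-- The region `E_f(T) ⊆ ℚ_S^{m+n}`, where the first `m` coordinates play the role of
`x` and the last `n` coordinates the role of `y`. -/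
def Efull (m n : ℕ) {s : ℕ} (p : Fin s → ℕ) [∀ i, Fact (p i).Prime]
    (fR : ℝ → ℝ) (fP : Fin s → ℝ → ℝ) (TR : ℝ) (TP : Fin s → ℝ) :
    Set ((Fin (m + n) → ℝ) × ∀ i, Fin (m + n) → ℚ_[p i]) :=
  {v | ‖fun a : Fin m => v.1 (Fin.castAdd n a)‖ ^ m
        ≤ fR (‖fun b : Fin n => v.1 (Fin.natAdd m b)‖ ^ n) ∧
      ‖fun b : Fin n => v.1 (Fin.natAdd m b)‖ ^ n ≤ TR ∧
      ∀ i, ‖fun a : Fin m => v.2 i (Fin.castAdd n a)‖ ^ m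
            ≤ fP i (‖fun b : Fin n => v.2 i (Fin.natAdd m b)‖ ^ n) ∧
          ‖fun b : Fin n => v.2 i (Fin.natAdd m b)‖ ^ n ≤ TP i}

/-- The operator norm of a real matrix acting on sup-normed spaces. -/
def opNorm {k l : ℕ} (M : Matrix (Fin k) (Fin l) ℝ) : ℝ :=
  ‖LinearMap.toContinuousLinearMap M.mulVecLin‖

/-- An element of the group `𝐇 = ∏_{p ∈ S} H_p` of block lower-triangular matrices,
given by its blocks at each place. -/
structure HElem (m n : ℕ) (s : ℕ) (p : Fin s → ℕ) [∀ i, Fact (p i).Prime] : Type where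
  aR : Matrix (Fin m) (Fin m) ℝ
  bR : Matrix (Fin n) (Fin m) ℝ
  cR : Matrix (Fin n) (Fin n) ℝ
  aP : ∀ i, Matrix (Fin m) (Fin m) ℚ_[p i]
  bP : ∀ i, Matrix (Fin n) (Fin m) ℚ_[p i]
  cP : ∀ i, Matrix (Fin n) (Fin n) ℚ_[p i]

/-- The action of an element of `𝐇` on `ℚ_S^m × ℚ_S^n`:
`h·(x, y) = (α x, β x + γ y)` at each place. -/
def HElem.act {m n s : ℕ} {p : Fin s → ℕ} [∀ i, Fact (p i).Prime] (h : HElem m n s p)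
    (xy : ((Fin m → ℝ) × ∀ i, Fin m → ℚ_[p i]) × ((Fin n → ℝ) × ∀ i, Fin n → ℚ_[p i])) :
    ((Fin m → ℝ) × ∀ i, Fin m → ℚ_[p i]) × ((Fin n → ℝ) × ∀ i, Fin n → ℚ_[p i]) :=
  ((h.aR.mulVec xy.1.1, fun i => (h.aP i).mulVec (xy.1.2 i)),
   (h.bR.mulVec xy.1.1 + h.cR.mulVec xy.2.1,
    fun i => (h.bP i).mulVec (xy.1.2 i) + (h.cP i).mulVec (xy.2.2 i)))

/-- Membership in `H̃_{∞,ε}`: operator norm bounds on the blocks. -/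
def inHtilde (m n : ℕ) (ε : ℝ) (α : Matrix (Fin m) (Fin m) ℝ) (β : Matrix (Fin n) (Fin m) ℝ)
    (γ : Matrix (Fin n) (Fin n) ℝ) : Prop :=
  opNorm α ^ m ≤ 1 + ε ∧ opNorm γ ^ n ≤ 1 + ε / 2 ∧ opNorm β ≤ ε / (4 * n)

/-- `h ∈ (H̃_{∞,ε} ∩ H̃_{∞,ε}⁻¹) × ∏_{p ∈ S_f} H_p(ℤ_p)`. -/
def HElem.isAdmissible {m n s : ℕ} {p : Fin s → ℕ} [∀ i, Fact (p i).Prime]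
    (h : HElem m n s p) (ε : ℝ) : Prop :=
  IsUnit h.aR.det ∧ IsUnit h.cR.det ∧
  inHtilde m n ε h.aR h.bR h.cR ∧
  inHtilde m n ε h.aR⁻¹ (-(h.cR⁻¹ * h.bR * h.aR⁻¹)) h.cR⁻¹ ∧
  ∀ i, ((∀ a b, ‖h.aP i a b‖ ≤ 1) ∧ ‖(h.aP i).det‖ = 1) ∧
      ((∀ a b, ‖h.cP i a b‖ ≤ 1) ∧ ‖(h.cP i).det‖ = 1) ∧
      (∀ a b, ‖h.bP i a b‖ ≤ 1)

end

/-! Fix `q ≠ 0`. The surjection `A ↦ A q` from matrices to vectors over `ℚ_S` maps `S`-integral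
matrices to `S`-integral vectors, so for `A` in the unit box, `A q` is uniformly distributed modulo
`ℤ_S^m`. Hence `vol(𝒜_q) ≤ 2 ^ m * ∏ ψ_p(‖q‖_p^n)`, the right hand side bounding the volume of the
target box.

To compare the sum of these bounds over `q ∈ ℤ_S^n` with the integral, attach to `q` the translate
by `q` of the unit box of the orthant pointing towards the origin. There `max ‖y‖_p 1` is at most
`max ‖q‖_p 1` at every place, so the integrand is at least its value at `q`. For each of the `2 ^ n`
orthants the boxes are disjoint, so the sum is at most `2 ^ n` times the integral.
-/

section FundamentalDomain

open Set
open scoped Pointwise ENNReal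

theorem preimage_const_add_iUnion_vadd {G : Type*} [AddCommGroup G] {Λ : AddSubgroup G}
    {g : G} (hg : g ∈ Λ) (B : Set G) :
    (g + ·) ⁻¹' (⋃ h : Λ, h +ᵥ B) = ⋃ h : Λ, h +ᵥ B := by
  ext x
  simp only [mem_preimage, mem_iUnion, mem_vadd_set_iff_neg_vadd_mem]
  refine (Equiv.addLeft (⟨g, hg⟩ : Λ)).symm.exists_congr_left.trans (exists_congr fun h => ?_)
  simp [AddSubgroup.vadd_def, add_assoc]

variable {G H : Type*} [AddCommGroup G] [MeasurableSpace G] [MeasurableAdd₂ G]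
  [AddCommGroup H] [MeasurableSpace H] [MeasurableAdd₂ H]
  {μ : Measure G} [μ.IsAddLeftInvariant] {ν : Measure H} [ν.IsAddLeftInvariant]
  {Λ : AddSubgroup G} [Countable Λ] {Γ : AddSubgroup H} [Countable Γ] {F : Set G} {F' : Set H}

theorem measure_inter_preimage_const_add (hF : IsAddFundamentalDomain Λ F μ) {E : Set G}
    (hE : MeasurableSet E) (hΛ : ∀ g ∈ Λ, (g + ·) ⁻¹' E = E) (x : G) :
    μ (F ∩ (x + ·) ⁻¹' E) = μ (F ∩ E) := by
  have hx : F ∩ (x + ·) ⁻¹' E = (x + ·) ⁻¹' (E ∩ (x +ᵥ F)) := by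
    ext y
    rw [preimage_inter, inter_comm]
    simp only [mem_inter_iff, mem_preimage, ← vadd_eq_add, vadd_mem_vadd_set_iff]
  rw [hx, measure_preimage_add, inter_comm F]
  exact (hF.vadd_of_comm x).measure_set_eq hF hE fun g => hΛ g g.2

/-- Average over all translates of `E`, applying Tonelli's theorem to `{(h, g) | h + T g ∈ E}`:
neither translating `E` in `H` nor translating `T ⁻¹' E` in `G` changes the measure of its part
in a fundamental domain. -/
theorem measure_inter_preimage_mul_measure [SFinite μ] [SFinite ν]
    (hF : IsAddFundamentalDomain Λ F μ) (hF' : IsAddFundamentalDomain Γ F' ν) {T : G →+ H}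
    (hT : Measurable T) (hsurj : Function.Surjective T) (hmap : Λ ≤ Γ.comap T) {E : Set H}
    (hE : MeasurableSet E) (hΓ : ∀ h ∈ Γ, (h + ·) ⁻¹' E = E) :
    μ (F ∩ T ⁻¹' E) * ν F' = μ F * ν (F' ∩ E) := by
  have hS : MeasurableSet {x : H × G | x.1 + T x.2 ∈ E} :=
    (measurable_fst.add (hT.comp measurable_snd)) hE
  have hfst (h : H) : μ (F ∩ {g | h + T g ∈ E}) = μ (F ∩ T ⁻¹' E) := by
    obtain ⟨x, rfl⟩ := hsurj h
    have hΛ (g) (hg : g ∈ Λ) : (g + ·) ⁻¹' (T ⁻¹' E) = T ⁻¹' E := by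
      ext x
      simpa using Set.ext_iff.1 (hΓ (T g) (hmap hg)) (T x)
    simpa [preimage] using measure_inter_preimage_const_add hF (hT hE) hΛ x
  have hsnd (g : G) : ν (F' ∩ {h | h + T g ∈ E}) = ν (F' ∩ E) := by
    simpa [preimage, add_comm] using measure_inter_preimage_const_add hF' hE hΓ (T g)
  calc μ (F ∩ T ⁻¹' E) * ν F'
      = ∫⁻ h in F', μ (F ∩ {g | h + T g ∈ E}) ∂ν := by simp [hfst]
    _ = ((ν.restrict F').prod (μ.restrict F)) {x | x.1 + T x.2 ∈ E} := by
        rw [Measure.prod_apply hS]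
        refine lintegral_congr fun h => ?_
        rw [Measure.restrict_apply (measurable_prodMk_left hS), inter_comm]
        rfl
    _ = ∫⁻ g in F, ν (F' ∩ {h | h + T g ∈ E}) ∂μ := by
        rw [Measure.prod_apply_symm hS]
        refine lintegral_congr fun g => ?_
        rw [Measure.restrict_apply (measurable_prodMk_right hS), inter_comm]
        rfl
    _ = μ F * ν (F' ∩ E) := by simp [hsnd, mul_comm]

theorem measure_inter_iUnion_vadd_le (hF : IsAddFundamentalDomain Λ F μ) (B : Set G) :
    μ (F ∩ ⋃ g : Λ, g +ᵥ B) ≤ μ B := by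
  rw [inter_iUnion, hF.measure_eq_tsum B]
  simp only [inter_comm F]
  exact measure_iUnion_le _

theorem measure_inter_preimage_iUnion_vadd_mul_le [SFinite μ] [SFinite ν]
    (hF : IsAddFundamentalDomain Λ F μ) (hF' : IsAddFundamentalDomain Γ F' ν) {T : G →+ H}
    (hT : Measurable T) (hsurj : Function.Surjective T) (hmap : Λ ≤ Γ.comap T) {B : Set H}
    (hB : MeasurableSet B) :
    μ (F ∩ T ⁻¹' ⋃ h : Γ, h +ᵥ B) * ν F' ≤ μ F * ν B := by
  rw [measure_inter_preimage_mul_measure hF hF' hT hsurj hmap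
    (.iUnion fun h => hB.const_vadd h) fun _ hx => preimage_const_add_iUnion_vadd hx B]
  exact mul_le_mul_right (measure_inter_iUnion_vadd_le hF' B) _

theorem tsum_le_card_mul_lintegral {κ : Type*} [Fintype κ] {F : κ → Set G}
    (hF : ∀ e, IsAddFundamentalDomain Λ (F e) μ) (hF1 : ∀ e, μ (F e) = 1) {f : G → ℝ≥0∞}
    (hf : ∀ g ∈ Λ, ∃ e, ∀ x ∈ F e, f g ≤ f (g + x)) :
    ∑' g : Λ, f g ≤ Fintype.card κ * ∫⁻ x, f x ∂μ := by
  have hle (g : Λ) : f g ≤ ∑ e, ∫⁻ x in F e, f (g +ᵥ x) ∂μ := by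
    obtain ⟨e, he⟩ := hf g g.2
    have hae : ∀ᵐ x ∂μ.restrict (F e), f g ≤ f (g +ᵥ x) := by
      filter_upwards [ae_restrict_mem₀ (hF e).nullMeasurableSet] with x hx using he x hx
    calc f g = ∫⁻ _ in F e, f g ∂μ := by simp [hF1]
      _ ≤ ∫⁻ x in F e, f (g +ᵥ x) ∂μ := lintegral_mono_ae hae
      _ ≤ ∑ e, ∫⁻ x in F e, f (g +ᵥ x) ∂μ :=
        Finset.single_le_sum (f := fun e => ∫⁻ x in F e, f (g +ᵥ x) ∂μ) (fun _ _ => zero_le)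
          (Finset.mem_univ e)
  calc ∑' g : Λ, f g ≤ ∑' g : Λ, ∑ e, ∫⁻ x in F e, f (g +ᵥ x) ∂μ := ENNReal.tsum_le_tsum hle
    _ = ∑ e, ∑' g : Λ, ∫⁻ x in F e, f (g +ᵥ x) ∂μ :=
      Summable.tsum_finsetSum fun _ _ => ENNReal.summable
    _ = Fintype.card κ * ∫⁻ x, f x ∂μ := by simp [← (hF _).lintegral_eq_tsum'' f]

end FundamentalDomain

section LocalVolumes

open Set Metric TopologicalSpace
open scoped ENNReal

theorem setOf_norm_pow_le_eq_closedBall {E : Type*} [SeminormedAddCommGroup E] {m : ℕ}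
    (hm : 0 < m) {c : ℝ} (hc : 0 ≤ c) :
    {x : E | ‖x‖ ^ m ≤ c} = closedBall 0 (c ^ (m⁻¹ : ℝ)) := by
  ext x
  rw [mem_closedBall_zero_iff, mem_ofPred_eq,
    Real.le_rpow_inv_iff_of_pos (norm_nonneg x) hc (by positivity), Real.rpow_natCast]

theorem real_volume_pi_setOf_norm_pow_card_le_eq {ι : Type*} [Fintype ι] [Nonempty ι] {c : ℝ}
    (hc : 0 ≤ c) :
    volume {x : ι → ℝ | ‖x‖ ^ Fintype.card ι ≤ c} =
      2 ^ Fintype.card ι * ENNReal.ofReal c := by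
  rw [setOf_norm_pow_le_eq_closedBall Fintype.card_pos hc,
    Real.volume_pi_closedBall _ (by positivity), mul_pow,
    Real.rpow_inv_natCast_pow hc Fintype.card_ne_zero, ENNReal.ofReal_mul (by positivity)]
  simp

theorem exists_isAddHaarMeasure_closedBall_eq_one (E : Type*) [NormedAddCommGroup E]
    [ProperSpace E] [MeasurableSpace E] [BorelSpace E] :
    ∃ μ : Measure E, μ.IsAddHaarMeasure ∧ μ (closedBall 0 1) = 1 := by
  let K : PositiveCompacts E :=
    { carrier := closedBall 0 1
      isCompact' := isCompact_closedBall _ _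
      interior_nonempty' := ⟨0, ball_subset_interior_closedBall (by simp)⟩ }
  exact ⟨Measure.addHaarMeasure K, inferInstance, Measure.addHaarMeasure_self⟩

section Padic

variable {p : ℕ} [Fact p.Prime] {ι : Type*} [Fintype ι]

theorem padic_pi_disjoint_closedBall {k : ℕ} {u v : ι → Fin (p ^ k)} (huv : u ≠ v) :
    Disjoint (closedBall (fun j => ((u j : ℕ) : ℚ_[p])) ((p : ℝ) ^ (-k : ℤ)))
      (closedBall (fun j => ((v j : ℕ) : ℚ_[p])) ((p : ℝ) ^ (-k : ℤ))) := by
  refine (IsUltrametricDist.closedBall_eq_or_disjoint _ _ _).resolve_left fun hball => huv ?_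
  have hmem := hball ▸ mem_closedBall_self (zpow_nonneg p.cast_nonneg (-k : ℤ))
  funext j
  have hnorm : ‖(((u j : ℕ) - (v j : ℕ) : ℤ) : ℚ_[p])‖ ≤ (p : ℝ) ^ (-k : ℤ) := by
    push_cast
    exact (norm_le_pi_norm _ j).trans (mem_closedBall_iff_norm.1 hmem)
  rw [Padic.norm_int_le_pow_iff_dvd, ← Int.modEq_iff_dvd] at hnorm
  have hmod : (v j : ℕ) ≡ u j [MOD p ^ k] := Int.natCast_modEq_iff.1 (by exact_mod_cast hnorm)
  exact Fin.ext (hmod.eq_of_lt_of_lt (v j).isLt (u j).isLt).symm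

variable [MeasurableSpace ℚ_[p]] [BorelSpace ℚ_[p]] (μ : Measure (ι → ℚ_[p]))
  [μ.IsAddLeftInvariant]

theorem padic_measure_pi_closedBall_mul_le (k : ℕ) :
    μ (closedBall 0 ((p : ℝ) ^ (-k : ℤ))) * (p : ℝ≥0∞) ^ (k * Fintype.card ι) ≤
      μ (closedBall 0 1) := by
  classical
  set ρ : ℝ := (p : ℝ) ^ (-k : ℤ)
  have hρ1 : ρ ≤ 1 :=
    zpow_le_one_of_nonpos₀ (by exact_mod_cast (Fact.out : p.Prime).one_le) (by simp)
  let c (u : ι → Fin (p ^ k)) : ι → ℚ_[p] := fun j => ((u j : ℕ) : ℚ_[p])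
  have hc (u) : μ (closedBall (c u) ρ) = μ (closedBall 0 ρ) := by
    rw [← measure_preimage_add μ (c u), preimage_add_closedBall, sub_self]
  have hsub (u) : closedBall (c u) ρ ⊆ closedBall 0 1 := by
    have hcu : c u ∈ closedBall 0 1 := mem_closedBall_zero_iff.2 <|
      (pi_norm_le_iff_of_nonneg zero_le_one).2 fun j => IsUltrametricDist.norm_natCast_le_one _ _
    rw [IsUltrametricDist.closedBall_eq_of_mem hcu]
    exact closedBall_subset_closedBall hρ1
  calc μ (closedBall 0 ρ) * (p : ℝ≥0∞) ^ (k * Fintype.card ι)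
      = ∑ u, μ (closedBall (c u) ρ) := by
        simp only [hc, Finset.sum_const, Finset.card_univ, Fintype.card_fun, Fintype.card_fin,
          nsmul_eq_mul, Nat.cast_pow, pow_mul, mul_comm]
    _ = μ (⋃ u, closedBall (c u) ρ) := by
        rw [measure_iUnion (fun u v h => padic_pi_disjoint_closedBall h)
          fun u => isClosed_closedBall.measurableSet, tsum_fintype]
    _ ≤ μ (closedBall 0 1) := measure_mono (iUnion_subset hsub)

theorem padic_measure_pi_closedBall_le {r : ℝ} (hr0 : 0 < r) (hr1 : r ≤ 1) :
    μ (closedBall 0 r) ≤ ENNReal.ofReal r ^ Fintype.card ι * μ (closedBall 0 1) := by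
  have hp : (1 : ℝ) < p := by exact_mod_cast (Fact.out : p.Prime).one_lt
  obtain ⟨l, hlr, hrl⟩ := exists_mem_Ico_zpow hr0 hp
  obtain ⟨k, rfl⟩ : ∃ k : ℕ, l = -k :=
    Int.exists_eq_neg_ofNat ((zpow_le_one_iff_right₀ hp).1 (hlr.trans hr1))
  have hsub : closedBall (0 : ι → ℚ_[p]) r ⊆ closedBall 0 ((p : ℝ) ^ (-k : ℤ)) := by
    intro x hx
    rw [mem_closedBall_zero_iff] at hx ⊢
    refine (pi_norm_le_iff_of_nonneg (by positivity)).2 fun j => ?_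
    exact (Padic.norm_le_pow_iff_norm_lt_pow_add_one _ _).2
      (((norm_le_pi_norm x j).trans hx).trans_lt hrl)
  have hinv : ((p : ℝ≥0∞) ^ k)⁻¹ ≤ ENNReal.ofReal r := by
    refine le_of_eq_of_le ?_ (ENNReal.ofReal_le_ofReal hlr)
    rw [_root_.zpow_neg, zpow_natCast, ENNReal.ofReal_inv_of_pos (by positivity),
      ENNReal.ofReal_pow (by positivity), ENNReal.ofReal_natCast]
  calc μ (closedBall 0 r)
      ≤ μ (closedBall 0 ((p : ℝ) ^ (-k : ℤ))) := measure_mono hsub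
    _ ≤ μ (closedBall 0 1) / (p : ℝ≥0∞) ^ (k * Fintype.card ι) :=
        (ENNReal.le_div_iff_mul_le (.inl (by simp [NeZero.ne])) (.inl (by simp))).2
          (padic_measure_pi_closedBall_mul_le μ k)
    _ = ((p : ℝ≥0∞) ^ k)⁻¹ ^ Fintype.card ι * μ (closedBall 0 1) := by
        rw [pow_mul, ENNReal.div_eq_inv_mul, ENNReal.inv_pow]
    _ ≤ ENNReal.ofReal r ^ Fintype.card ι * μ (closedBall 0 1) := by gcongr

theorem padic_measure_pi_setOf_norm_pow_card_le [Nonempty ι] {c : ℝ} (hc0 : 0 < c) (hc1 : c ≤ 1) :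
    μ {x | ‖x‖ ^ Fintype.card ι ≤ c} ≤ ENNReal.ofReal c * μ (closedBall 0 1) := by
  rw [setOf_norm_pow_le_eq_closedBall Fintype.card_pos hc0.le]
  refine (padic_measure_pi_closedBall_le μ (by positivity)
    (Real.rpow_le_one hc0.le hc1 (by positivity))).trans_eq ?_
  rw [← ENNReal.ofReal_pow (by positivity),
    Real.rpow_inv_natCast_pow hc0.le Fintype.card_ne_zero]

end Padic

end LocalVolumes

section SIntegers

open Set

variable {s : ℕ} (p : Fin s → ℕ) [∀ i, Fact (p i).Prime]

theorem prod_primes_ne_zero : ((∏ i, p i : ℕ) : ℚ) ≠ 0 :=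
  Nat.cast_ne_zero.2 (Finset.prod_ne_zero_iff.2 fun _ _ => NeZero.ne _)

/-- The ring `ℤ_S` of `S`-integers as a subring of `ℚ`. -/
def sIntegers : Subring ℚ where
  carrier := {z | IsZS (∏ i, p i) z}
  zero_mem' := ⟨0, 0, by simp⟩
  one_mem' := ⟨1, 0, by simp⟩
  add_mem' := by
    rintro _ _ ⟨a, k, rfl⟩ ⟨b, l, rfl⟩
    refine ⟨a * (∏ i, p i : ℕ) ^ l + b * (∏ i, p i : ℕ) ^ k, k + l, ?_⟩
    have hP := prod_primes_ne_zero p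
    rw [div_add_div _ _ (pow_ne_zero _ hP) (pow_ne_zero _ hP), pow_add]
    push_cast
    ring
  neg_mem' := by
    rintro _ ⟨a, k, rfl⟩
    exact ⟨-a, k, by push_cast; ring⟩
  mul_mem' := by
    rintro _ _ ⟨a, k, rfl⟩ ⟨b, l, rfl⟩
    exact ⟨a * b, k + l, by rw [div_mul_div_comm, pow_add, Int.cast_mul]⟩

theorem inv_mem_sIntegers (i : Fin s) : (p i : ℚ)⁻¹ ∈ sIntegers p := by
  refine ⟨(∏ j ∈ Finset.univ.erase i, p j : ℕ), 1, ?_⟩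
  have hprod := Finset.mul_prod_erase Finset.univ p (Finset.mem_univ i)
  have hpi : (p i : ℚ) ≠ 0 := NeZero.ne _
  rw [pow_one, eq_div_iff (prod_primes_ne_zero p), ← hprod, Nat.cast_mul, Int.cast_natCast,
    inv_mul_cancel_left₀ hpi]

variable {p}

theorem den_eq_one_of_mem_sIntegers {z : ℚ} (hz : z ∈ sIntegers p)
    (hint : ∀ i, (z : ℚ_[p i]) ∈ PadicInt.subring (p i)) : z.den = 1 := by
  by_contra hne
  obtain ⟨r, hr, hrz⟩ := Nat.exists_prime_and_dvd hne
  obtain ⟨a, k, hak⟩ := hz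
  have hdvd : z.den ∣ (∏ i, p i) ^ k := by
    have h := Rat.den_dvd a (((∏ i, p i) ^ k : ℕ) : ℤ)
    rw [Rat.divInt_eq_div, Int.cast_natCast, Nat.cast_pow, ← hak] at h
    exact_mod_cast h
  obtain ⟨i, -, hi⟩ :=
    (Prime.dvd_finsetProd_iff hr.prime _).1 (hr.dvd_of_dvd_pow (hrz.trans hdvd))
  obtain rfl := (Nat.prime_dvd_prime_iff_eq hr Fact.out).1 hi
  have hunit : ‖(z.den : ℚ_[p i])‖ = 1 := by
    simpa [PadicInt.norm_def] using PadicInt.isUnit_iff.1 (PadicInt.isUnit_den z (hint i))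
  exact (Padic.norm_natCast_lt_one_iff.2 hrz).ne hunit

theorem eq_zero_of_mem_sIntegers {z : ℚ} (hz : z ∈ sIntegers p) (habs : |z| < 1)
    (hint : ∀ i, (z : ℚ_[p i]) ∈ PadicInt.subring (p i)) : z = 0 := by
  have hnum : (z.num : ℚ) = z := (Rat.den_eq_one_iff z).1 (den_eq_one_of_mem_sIntegers hz hint)
  rw [← hnum] at habs ⊢
  exact_mod_cast Int.abs_lt_one_iff.1 (by exact_mod_cast habs)

theorem padic_exists_sub_div_pow_mem_subring {p : ℕ} [Fact p.Prime] (x : ℚ_[p]) :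
    ∃ (a : ℤ) (k : ℕ), x - a / (p : ℚ_[p]) ^ k ∈ PadicInt.subring p := by
  have hp0 : (p : ℚ_[p]) ≠ 0 := NeZero.ne _
  obtain ⟨k, hk⟩ := pow_unbounded_of_one_lt ‖x‖
    (show (1 : ℝ) < p by exact_mod_cast (Fact.out : p.Prime).one_lt)
  have hpk : ‖(p : ℚ_[p]) ^ k‖ = ((p : ℝ) ^ k)⁻¹ := by
    rw [norm_pow, Padic.norm_p, inv_pow]
  have hxk : ‖x * (p : ℚ_[p]) ^ k‖ ≤ 1 := by
    rw [norm_mul, hpk]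
    exact mul_inv_le_one_of_le₀ hk.le (by positivity)
  obtain ⟨y, hy⟩ : ∃ y : ℤ_[p], (y : ℚ_[p]) = x * (p : ℚ_[p]) ^ k := ⟨⟨_, hxk⟩, rfl⟩
  refine ⟨y.appr k, k, ?_⟩
  have happr : ‖(y : ℚ_[p]) - y.appr k‖ ≤ ((p : ℝ) ^ k)⁻¹ := by
    simpa [PadicInt.norm_def] using
      (PadicInt.norm_le_pow_iff_mem_span_pow _ _).2 (PadicInt.appr_spec k y)
  have hx : x - (y.appr k : ℤ) / (p : ℚ_[p]) ^ k = (y - y.appr k) / (p : ℚ_[p]) ^ k := by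
    rw [sub_div, hy, mul_div_cancel_right₀ x (pow_ne_zero k hp0), Int.cast_natCast]
  rw [PadicInt.mem_subring_iff, hx, norm_div, hpk]
  exact div_le_one_of_le₀ happr (by positivity)

theorem exists_sIntegers_sub_mem_subring (hpinj : Function.Injective p) (y : ∀ i, ℚ_[p i]) :
    ∃ z ∈ sIntegers p, ∀ i, y i - z ∈ PadicInt.subring (p i) := by
  choose a k hak using fun i => padic_exists_sub_div_pow_mem_subring (y i)
  have hmem (i) : (a i / (p i : ℚ) ^ k i) ∈ sIntegers p := by
    rw [div_eq_mul_inv, ← inv_pow]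
    exact mul_mem (intCast_mem _ _) (pow_mem (inv_mem_sIntegers p i) _)
  have hint (i j) (hji : j ≠ i) : a j / (p j : ℚ_[p i]) ^ k j ∈ PadicInt.subring (p i) := by
    have hunit : ‖(p j : ℚ_[p i])‖ = 1 := Padic.norm_natCast_eq_one_iff.2
      ((Nat.coprime_primes Fact.out Fact.out).2 (hpinj.ne hji.symm))
    rw [PadicInt.mem_subring_iff, norm_div, norm_pow, hunit, one_pow, div_one]
    exact Padic.norm_int_le_one _
  refine ⟨∑ i, a i / (p i : ℚ) ^ k i, sum_mem fun i _ => hmem i, fun i => ?_⟩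
  push_cast
  rw [← Finset.add_sum_erase _ _ (Finset.mem_univ i), ← sub_sub]
  exact sub_mem (hak i) (sum_mem fun j hj => hint i j (Finset.ne_of_mem_erase hj))

variable (p) in
/-- The ring `ℚ_S`; its `ℚ`-algebra structure map is the diagonal embedding. -/
abbrev SAdele : Type := ℝ × ∀ i, ℚ_[p i]

variable (p) in
/-- The box `[c, c + 1) × ∏ ℤ_p` in `ℚ_S`, whose translates by `ℤ_S` tile `ℚ_S`. -/
def unitBox (c : ℝ) : Set (SAdele p) :=
  {x | x.1 ∈ Ico c (c + 1) ∧ ∀ i, x.2 i ∈ PadicInt.subring (p i)}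

theorem exists_sIntegers_add_mem_unitBox (hpinj : Function.Injective p) (c : ℝ) (x : SAdele p) :
    ∃ z : sIntegers p, algebraMap ℚ (SAdele p) z + x ∈ unitBox p c := by
  obtain ⟨z, hz, hzx⟩ := exists_sIntegers_sub_mem_subring hpinj x.2
  let l : ℤ := ⌊x.1 - z - c⌋
  refine ⟨⟨-z - l, sub_mem (neg_mem hz) (intCast_mem _ _)⟩, ?_, fun i => ?_⟩
  · have hle := Int.floor_le (x.1 - z - c)
    have hlt := Int.lt_floor_add_one (x.1 - z - c)
    simp only [Prod.fst_add, Prod.algebraMap_apply, eq_ratCast, mem_Ico]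
    push_cast
    constructor <;> linarith
  · have hsplit : (algebraMap ℚ (SAdele p) (-z - l) + x).2 i = (x.2 i - z) - (l : ℤ) := by
      change ((-z - l : ℚ) : ℚ_[p i]) + x.2 i = _
      push_cast
      ring
    rw [hsplit]
    exact sub_mem (hzx i) (intCast_mem _ _)

theorem eq_of_add_mem_unitBox {c : ℝ} {x : SAdele p} {z w : sIntegers p}
    (hz : algebraMap ℚ (SAdele p) z + x ∈ unitBox p c)
    (hw : algebraMap ℚ (SAdele p) w + x ∈ unitBox p c) : z = w := by
  refine Subtype.ext (sub_eq_zero.1 (eq_zero_of_mem_sIntegers (sub_mem z.2 w.2) ?_ fun i => ?_))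
  · have hzR : ((z : ℚ) : ℝ) + x.1 ∈ Ico c (c + 1) := hz.1
    have hwR : ((w : ℚ) : ℝ) + x.1 ∈ Ico c (c + 1) := hw.1
    have habs : |((z : ℚ) : ℝ) - ((w : ℚ) : ℝ)| < 1 := by
      rw [abs_lt]
      constructor <;> linarith [hzR.1, hzR.2, hwR.1, hwR.2]
    exact_mod_cast habs
  · have hmem := sub_mem (hz.2 i) (hw.2 i)
    simpa using hmem

end SIntegers

section Lattice

open Set

variable {s : ℕ} {p : Fin s → ℕ} [∀ i, Fact (p i).Prime] {V : Type*} [AddCommGroup V] {J : Type*}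

/-- The lattice of `S`-integral points of a group `V` identified with `ℚ_S^J` by `e`. -/
noncomputable def sLattice (e : V ≃+ (J → SAdele p)) : AddSubgroup V :=
  (e.symm.toAddMonoidHom.comp
    (((algebraMap ℚ (SAdele p)).comp (sIntegers p).subtype).toAddMonoidHom.compLeft J)).range

/-- The box of points of `V ≃ ℚ_S^J` with `j`-th coordinate in `[c j, c j + 1) × ∏ ℤ_p`. -/
def coordBox (e : V ≃+ (J → SAdele p)) (c : J → ℝ) : Set V :=
  {x | ∀ j, e x j ∈ unitBox p (c j)}

variable {e : V ≃+ (J → SAdele p)}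

theorem mem_sLattice {x : V} :
    x ∈ sLattice e ↔ ∃ z : J → sIntegers p, ∀ j, e x j = algebraMap ℚ (SAdele p) (z j) := by
  simp only [sLattice, AddMonoidHom.mem_range, AddMonoidHom.comp_apply]
  refine exists_congr fun z => (AddEquiv.symm_apply_eq e).trans ?_
  rw [eq_comm, funext_iff]
  rfl

instance countable_sLattice [Finite J] : Countable (sLattice e) :=
  (countable_range _).to_subtype

variable [∀ i, MeasurableSpace ℚ_[p i]] [∀ i, BorelSpace ℚ_[p i]]

theorem measurableSet_unitBox (c : ℝ) : MeasurableSet (unitBox p c) := by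
  have hint (i) : MeasurableSet {x : SAdele p | x.2 i ∈ PadicInt.subring (p i)} :=
    have hclosed : IsClosed {y : ℚ_[p i] | ‖y‖ ≤ 1} := isClosed_le continuous_norm continuous_const
    (measurable_pi_apply i).comp measurable_snd hclosed.measurableSet
  have heq : unitBox p c =
      Prod.fst ⁻¹' Ico c (c + 1) ∩ ⋂ i, {x : SAdele p | x.2 i ∈ PadicInt.subring (p i)} := by
    ext x
    simp [unitBox]
  rw [heq]
  exact (measurable_fst measurableSet_Ico).inter (.iInter hint)

variable [MeasurableSpace V]

theorem isAddFundamentalDomain_coordBox (hpinj : Function.Injective p) [Countable J]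
    (he : Measurable e) (c : J → ℝ) (μ : Measure V) :
    IsAddFundamentalDomain (sLattice e) (coordBox e c) μ := by
  have hmeas : MeasurableSet (coordBox e c) := by
    rw [coordBox, ofPred_forall]
    exact .iInter fun j => (measurable_pi_apply j).comp he (measurableSet_unitBox (c j))
  refine .mk' hmeas.nullMeasurableSet fun x => ?_
  choose z hz using fun j => exists_sIntegers_add_mem_unitBox hpinj (c j) (e x j)
  have hlattice : e.symm (fun j => algebraMap ℚ (SAdele p) (z j)) ∈ sLattice e :=
    mem_sLattice.2 ⟨z, by simp⟩
  refine ⟨⟨_, hlattice⟩, fun j => by simpa [AddSubgroup.vadd_def] using hz j, ?_⟩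
  rintro ⟨g, hg⟩ hgx
  obtain ⟨w, hw⟩ := mem_sLattice.1 hg
  have hwz (j) : w j = z j := eq_of_add_mem_unitBox (c := c j) (x := e x j)
    (by simpa [AddSubgroup.vadd_def, hw] using hgx j) (hz j)
  refine Subtype.ext ((AddEquiv.eq_symm_apply e).2 (funext fun j => ?_))
  rw [hw, hwz]

end Lattice

instance instMeasurableAdd₂Prod {G H : Type*} [Add G] [MeasurableSpace G] [MeasurableAdd₂ G]
    [Add H] [MeasurableSpace H] [MeasurableAdd₂ H] : MeasurableAdd₂ (G × H) where
  measurable_add := by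
    refine Measurable.prodMk ?_ ?_
    · exact (measurable_fst.comp measurable_fst).add (measurable_fst.comp measurable_snd)
    · exact (measurable_snd.comp measurable_fst).add (measurable_snd.comp measurable_snd)

section Coordinates

open Set Metric

variable {s : ℕ} (p : Fin s → ℕ) [∀ i, Fact (p i).Prime] (ι κ : Type*)

/-- The identification of the two ways of writing vectors over `ℚ_S`: a vector at each place, or
an element of `ℚ_S` in each coordinate. -/
def vecEquiv : ((ι → ℝ) × ∀ i, ι → ℚ_[p i]) ≃+ (ι → SAdele p) where
  toFun x j := (x.1 j, fun i => x.2 i j)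
  invFun y := (fun j => (y j).1, fun i j => (y j).2 i)
  map_add' _ _ := rfl

/-- The analogue of `vecEquiv` for matrices. -/
def matEquiv : ((ι → κ → ℝ) × ∀ i, ι → κ → ℚ_[p i]) ≃+ (ι × κ → SAdele p) where
  toFun A j := (A.1 j.1 j.2, fun i => A.2 i j.1 j.2)
  invFun y := (fun a b => (y (a, b)).1, fun i a b => (y (a, b)).2 i)
  map_add' _ _ := rfl

variable [∀ i, MeasurableSpace ℚ_[p i]]

theorem measurable_vecEquiv : Measurable (vecEquiv p ι) := by
  refine measurable_pi_lambda _ fun j => ?_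
  change Measurable fun x : (ι → ℝ) × ∀ i, ι → ℚ_[p i] => (x.1 j, fun i => x.2 i j)
  fun_prop

theorem measurable_matEquiv : Measurable (matEquiv p ι κ) := by
  refine measurable_pi_lambda _ fun j => ?_
  change Measurable fun A : (ι → κ → ℝ) × ∀ i, ι → κ → ℚ_[p i] =>
    (A.1 j.1 j.2, fun i => A.2 i j.1 j.2)
  fun_prop

variable {p ι κ} [Fintype ι] [Fintype κ]

theorem measure_coordBox_vecEquiv (c : ι → ℝ) (μ : ∀ i, Measure (ι → ℚ_[p i]))
    [∀ i, SigmaFinite (μ i)] (hμ : ∀ i, μ i {y | ∀ j, ‖y j‖ ≤ 1} = 1) :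
    ((volume : Measure (ι → ℝ)).prod (Measure.pi μ)) (coordBox (vecEquiv p ι) c) = 1 := by
  have hbox : coordBox (vecEquiv p ι) c =
      (univ.pi fun j => Ico (c j) (c j + 1)) ×ˢ univ.pi fun i => {y | ∀ j, ‖y j‖ ≤ 1} := by
    ext x
    simp [coordBox, vecEquiv, unitBox, forall_and, mem_pi, PadicInt.mem_subring_iff,
      forall_comm (α := ι)]
  rw [hbox, Measure.prod_prod, Measure.pi_pi, Real.volume_pi_Ico]
  simp [hμ]

theorem measure_coordBox_matEquiv (c : ι × κ → ℝ) (ν : ∀ i, Measure (ι → κ → ℚ_[p i]))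
    [∀ i, SigmaFinite (ν i)] (hν : ∀ i, ν i {A | ∀ a b, ‖A a b‖ ≤ 1} = 1) :
    ((volume : Measure (ι → κ → ℝ)).prod (Measure.pi ν)) (coordBox (matEquiv p ι κ) c) = 1 := by
  have hbox : coordBox (matEquiv p ι κ) c =
      (univ.pi fun a => univ.pi fun b => Ico (c (a, b)) (c (a, b) + 1)) ×ˢ
        univ.pi fun i => {A | ∀ a b, ‖A a b‖ ≤ 1} := by
    ext A
    exact ⟨fun h => ⟨fun a _ b _ => (h (a, b)).1, fun i _ a b => (h (a, b)).2 i⟩,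
      fun h j => ⟨h.1 j.1 trivial j.2 trivial, fun i => h.2 i trivial j.1 j.2⟩⟩
  rw [hbox, Measure.prod_prod, Measure.pi_pi, volume_pi_pi]
  simp [hν, volume_pi_pi]

end Coordinates

section ApproximatingFunctions

open Set

/-- An approximating function, extended by `1` to the non-positive reals. -/
structure IsApproximating (f : ℝ → ℝ) : Prop where
  pos (t : ℝ) : 0 < f t
  antitone : Antitone f
  eq_one ⦃t : ℝ⦄ : t ≤ 1 → f t = 1

namespace IsApproximating

variable {f : ℝ → ℝ}

theorem of_antitoneOn (hpos : ∀ t, 0 < f t) (hanti : AntitoneOn f (Ioi 0))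
    (hone : ∀ ⦃t⦄, t ≤ 1 → f t = 1) : IsApproximating f where
  pos := hpos
  antitone t u htu := by
    rcases le_or_gt u 1 with hu | hu
    · rw [hone hu, hone (htu.trans hu)]
    rcases le_or_gt t 1 with ht | ht
    · rw [hone ht, ← hone le_rfl]
      exact hanti (mem_Ioi.2 one_pos) (one_pos.trans hu) hu.le
    · exact hanti (one_pos.trans ht) (one_pos.trans hu) htu
  eq_one := hone

theorem apply_max_one (hf : IsApproximating f) (t : ℝ) : f (max t 1) = f t := by
  rcases le_total t 1 with ht | ht
  · rw [max_eq_right ht, hf.eq_one ht, hf.eq_one le_rfl]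
  · rw [max_eq_left ht]

theorem le_of_le_max_one (hf : IsApproximating f) {t u : ℝ} (h : t ≤ max u 1) : f u ≤ f t :=
  hf.apply_max_one u ▸ hf.antitone h

theorem le_one (hf : IsApproximating f) (t : ℝ) : f t ≤ 1 :=
  hf.eq_one le_rfl ▸ hf.le_of_le_max_one (le_max_right t 1)

end IsApproximating

theorem ApproxFamily.isApproximating_psiR {m n s : ℕ} {p : Fin s → ℕ}
    (ψ : ApproxFamily m n s p) : IsApproximating ψ.psiR :=
  .of_antitoneOn ψ.posR (fun _ ht _ _ htu => ψ.antiR ht htu) ψ.oneR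

theorem ApproxFamily.isApproximating_psiP {m n s : ℕ} {p : Fin s → ℕ}
    (ψ : ApproxFamily m n s p) (i : Fin s) : IsApproximating (ψ.psiP i) :=
  .of_antitoneOn (ψ.posP i) (fun _ ht _ _ htu => ψ.antiP i ht htu) (ψ.oneP i)

end ApproximatingFunctions

section LatticeSum

open Set

theorem pow_le_max_pow_one {a b : ℝ} (ha : 0 ≤ a) (h : a ≤ max b 1) (k : ℕ) :
    a ^ k ≤ max (b ^ k) 1 := by
  rcases le_max_iff.1 h with h | h
  · exact le_max_of_le_left (pow_le_pow_left₀ ha h k)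
  · exact le_max_of_le_right (pow_le_one₀ ha h)

theorem abs_add_le_max_of_mul_nonpos {a b : ℝ} (h : a * b ≤ 0) : |a + b| ≤ max |a| |b| := by
  rcases mul_nonpos_iff.1 h with ⟨ha, hb⟩ | ⟨ha, hb⟩
  · rw [abs_of_nonneg ha, abs_of_nonpos hb, abs_le', le_max_iff, le_max_iff]
    exact ⟨.inl (by linarith), .inr (by linarith)⟩
  · rw [abs_of_nonpos ha, abs_of_nonneg hb, abs_le', le_max_iff, le_max_iff]
    exact ⟨.inr (by linarith), .inl (by linarith)⟩

variable {s : ℕ} {p : Fin s → ℕ} [∀ i, Fact (p i).Prime] {ι : Type*} [Fintype ι]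
  {ψR : ℝ → ℝ} {ψP : Fin s → ℝ → ℝ}

variable (ψR ψP) in
/-- The product over all places of `ψ_p(‖y‖_p^k)`. -/
noncomputable def approxProd (k : ℕ) (y : (ι → ℝ) × ∀ i, ι → ℚ_[p i]) : ℝ :=
  ψR (‖y.1‖ ^ k) * ∏ i, ψP i (‖y.2 i‖ ^ k)

theorem approxProd_le_approxProd (hψR : IsApproximating ψR) (hψP : ∀ i, IsApproximating (ψP i))
    (k : ℕ) {x y : (ι → ℝ) × ∀ i, ι → ℚ_[p i]} (hR : ‖y.1‖ ≤ max ‖x.1‖ 1)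
    (hP : ∀ i, ‖y.2 i‖ ≤ max ‖x.2 i‖ 1) : approxProd ψR ψP k x ≤ approxProd ψR ψP k y :=
  mul_le_mul (hψR.le_of_le_max_one (pow_le_max_pow_one (norm_nonneg _) hR k))
    (Finset.prod_le_prod (fun i _ => ((hψP i).pos _).le) fun i _ =>
      (hψP i).le_of_le_max_one (pow_le_max_pow_one (norm_nonneg _) (hP i) k))
    (Finset.prod_nonneg fun i _ => ((hψP i).pos _).le) (hψR.pos _).le

theorem exists_approxProd_le_approxProd_add (hψR : IsApproximating ψR)
    (hψP : ∀ i, IsApproximating (ψP i)) (k : ℕ) (x : (ι → ℝ) × ∀ i, ι → ℚ_[p i]) :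
    ∃ e : Finset ι, ∀ t ∈ coordBox (vecEquiv p ι) (indicator (e : Set ι) (-1)),
      approxProd ψR ψP k x ≤ approxProd ψR ψP k (x + t) := by
  classical
  -- With this choice the box points from `x` towards the origin.
  refine ⟨Finset.univ.filter (0 < x.1 ·), fun t ht =>
    approxProd_le_approxProd hψR hψP k ?_ fun i => ?_⟩ <;>
    refine (pi_norm_le_iff_of_nonneg (by positivity)).2 fun j => ?_
  · obtain ⟨hle, hlt⟩ : t.1 j ∈ Ico _ _ := (ht j).1
    simp only [indicator_apply, Finset.mem_coe, Finset.mem_filter_univ, Pi.neg_apply,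
      Pi.one_apply] at hle hlt
    have hsign : x.1 j * t.1 j ≤ 0 ∧ |t.1 j| ≤ 1 := by
      rw [abs_le]
      split_ifs at hle hlt with hx
      · exact ⟨mul_nonpos_of_nonneg_of_nonpos hx.le (by linarith), by linarith, by linarith⟩
      · exact ⟨mul_nonpos_of_nonpos_of_nonneg (not_lt.1 hx) hle, by linarith, by linarith⟩
    exact (abs_add_le_max_of_mul_nonpos hsign.1).trans
      (max_le_max (norm_le_pi_norm x.1 j) hsign.2)
  · exact (Padic.nonarchimedean _ _).trans
      (max_le_max (norm_le_pi_norm (x.2 i) j) ((ht j).2 i))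

variable [∀ i, MeasurableSpace ℚ_[p i]] [∀ i, BorelSpace ℚ_[p i]]

theorem tsum_sLattice_approxProd_le (hpinj : Function.Injective p) (hψR : IsApproximating ψR)
    (hψP : ∀ i, IsApproximating (ψP i)) (k : ℕ) (μ : ∀ i, Measure (ι → ℚ_[p i]))
    [∀ i, SigmaFinite (μ i)] [∀ i, (μ i).IsAddLeftInvariant]
    (hμ : ∀ i, μ i {y | ∀ j, ‖y j‖ ≤ 1} = 1) :
    ∑' g : sLattice (vecEquiv p ι), ENNReal.ofReal (approxProd ψR ψP k g.1) ≤
      2 ^ Fintype.card ι * ∫⁻ y, ENNReal.ofReal (approxProd ψR ψP k y)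
        ∂((volume : Measure (ι → ℝ)).prod (Measure.pi μ)) := by
  refine (tsum_le_card_mul_lintegral (κ := Finset ι)
    (fun e => isAddFundamentalDomain_coordBox hpinj (measurable_vecEquiv p ι) _ _)
    (fun e => measure_coordBox_vecEquiv (indicator (e : Set ι) (-1)) μ hμ)
    (f := fun y => ENNReal.ofReal (approxProd ψR ψP k y)) fun g _ => ?_).trans_eq (by simp)
  obtain ⟨e, he⟩ := exists_approxProd_le_approxProd_add hψR hψP k g
  exact ⟨e, fun t ht => ENNReal.ofReal_le_ofReal (he t ht)⟩

end LatticeSum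

section BadSets

open Set Metric
open scoped Pointwise

variable {s : ℕ} (p : Fin s → ℕ) [∀ i, Fact (p i).Prime] (ι : Type*) {κ : Type*}

/-- The box in `ℚ_S^ι` of vectors `x` with `‖x‖_p^k` at most `cR`, respectively `cP`, at the
infinite and finite places. -/
def normBox [Fintype ι] (k : ℕ) (cR : ℝ) (cP : Fin s → ℝ) :
    Set ((ι → ℝ) × ∀ i, ι → ℚ_[p i]) :=
  {x | ‖x‖ ^ k ≤ cR} ×ˢ univ.pi fun i => {x | ‖x‖ ^ k ≤ cP i}

/-- The set of matrices `A` with entries in `[0, 1) × ∏ ℤ_p` for which some translate of `A q` by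
an `S`-integral vector lies in `normBox p ι k cR cP`; this is `𝒜_q` when `cR` and `cP` are the
values of the approximating functions at `q`. -/
def badSet [Fintype ι] [Fintype κ] (k : ℕ) (q : κ → ℚ) (cR : ℝ) (cP : Fin s → ℝ) :
    Set ((ι → κ → ℝ) × ∀ i, ι → κ → ℚ_[p i]) :=
  {A | (∀ a b, 0 ≤ A.1 a b ∧ A.1 a b < 1) ∧ (∀ i a b, ‖A.2 i a b‖ ≤ 1) ∧
    ∃ v : ι → ℚ, (∀ a, IsZS (∏ i, p i) (v a)) ∧
      ‖fun a => (∑ b, A.1 a b * (q b : ℝ)) + (v a : ℝ)‖ ^ k ≤ cR ∧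
      ∀ i, ‖fun a => (∑ b, A.2 i a b * (q b : ℚ_[p i])) + (v a : ℚ_[p i])‖ ^ k ≤ cP i}

/-- The homomorphism `A ↦ A q` from matrices to vectors over `ℚ_S`, for a rational vector `q`. -/
noncomputable def mulVecRat [Fintype κ] (q : κ → ℚ) :
    ((ι → κ → ℝ) × ∀ i, ι → κ → ℚ_[p i]) →+ (ι → ℝ) × ∀ i, ι → ℚ_[p i] where
  toFun A := (fun a => ∑ b, A.1 a b * (q b : ℝ), fun i a => ∑ b, A.2 i a b * (q b : ℚ_[p i]))
  map_zero' := by ext <;> simp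
  map_add' A B := by ext <;> simp [add_mul, Finset.sum_add_distrib]

variable {p ι} [Fintype κ]

theorem mulVecRat_surjective {q : κ → ℚ} (hq : q ≠ 0) :
    Function.Surjective (mulVecRat p ι q) := by
  classical
  obtain ⟨b, hb⟩ : ∃ b, q b ≠ 0 := Function.ne_iff.1 hq
  intro x
  refine ⟨(fun a => Pi.single b (x.1 a / q b), fun i a => Pi.single b (x.2 i a / q b)), ?_⟩
  refine Prod.ext (funext fun a => ?_) (funext fun i => funext fun a => ?_)
  all_goals simp [mulVecRat, Pi.single_apply, hb]

theorem sLattice_le_comap_mulVecRat {q : κ → ℚ} (hq : ∀ b, q b ∈ sIntegers p) :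
    sLattice (matEquiv p ι κ) ≤ (sLattice (vecEquiv p ι)).comap (mulVecRat p ι q) := by
  intro A hA
  obtain ⟨z, hz⟩ := mem_sLattice.1 hA
  have hzR (a b) : A.1 a b = ((z (a, b) : ℚ) : ℝ) := congrArg Prod.fst (hz (a, b))
  have hzP (i a b) : A.2 i a b = ((z (a, b) : ℚ) : ℚ_[p i]) :=
    congrFun (congrArg Prod.snd (hz (a, b))) i
  refine mem_sLattice.2 ⟨fun a => ∑ b, z (a, b) * ⟨q b, hq b⟩, fun a => ?_⟩
  refine Prod.ext ?_ (funext fun i => ?_)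
  · simp [vecEquiv, mulVecRat, hzR, Prod.fst_sum]
  · simp [vecEquiv, mulVecRat, hzP, Prod.snd_sum]

theorem badSet_subset [Fintype ι] (k : ℕ) (q : κ → ℚ) (cR : ℝ) (cP : Fin s → ℝ) :
    badSet p ι k q cR cP ⊆ coordBox (matEquiv p ι κ) 0 ∩
      mulVecRat p ι q ⁻¹' ⋃ h : sLattice (vecEquiv p ι), h +ᵥ normBox p ι k cR cP := by
  rintro A ⟨hAR, hAP, v, hv, hR, hP⟩
  refine ⟨fun j => ⟨by simpa [matEquiv] using hAR j.1 j.2, fun i => hAP i j.1 j.2⟩, mem_iUnion.2 ?_⟩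
  have hlattice : (fun a => (v a : ℝ), fun i a => (v a : ℚ_[p i])) ∈ sLattice (vecEquiv p ι) :=
    mem_sLattice.2 ⟨fun a => ⟨v a, hv a⟩, fun _ => rfl⟩
  refine ⟨-⟨_, hlattice⟩, mem_vadd_set_iff_neg_vadd_mem.2 ?_⟩
  rw [neg_neg, AddSubgroup.vadd_def, vadd_eq_add, add_comm]
  exact ⟨hR, fun i _ => hP i⟩

variable [∀ i, MeasurableSpace ℚ_[p i]] [∀ i, BorelSpace ℚ_[p i]]

theorem measurable_mulVecRat (q : κ → ℚ) : Measurable (mulVecRat p ι q) := by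
  refine Measurable.prodMk (measurable_pi_lambda _ fun a => ?_)
    (measurable_pi_lambda _ fun i => measurable_pi_lambda _ fun a => ?_)
  all_goals exact Finset.measurable_sum _ fun b _ => Measurable.mul_const (by fun_prop) _

variable [Fintype ι]

theorem measurableSet_normBox (k : ℕ) (cR : ℝ) (cP : Fin s → ℝ) :
    MeasurableSet (normBox p ι k cR cP) :=
  (isClosed_le (by fun_prop) continuous_const).measurableSet.prod
    (.univ_pi fun _ => (isClosed_le (by fun_prop) continuous_const).measurableSet)

theorem measure_normBox_le [Nonempty ι] (ρ : ∀ i, Measure (ι → ℚ_[p i])) [∀ i, SigmaFinite (ρ i)]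
    [∀ i, (ρ i).IsAddLeftInvariant] (hρ : ∀ i, ρ i (closedBall 0 1) = 1) {cR : ℝ}
    {cP : Fin s → ℝ} (hcR : 0 ≤ cR) (hcP0 : ∀ i, 0 < cP i) (hcP1 : ∀ i, cP i ≤ 1) :
    ((volume : Measure (ι → ℝ)).prod (Measure.pi ρ)) (normBox p ι (Fintype.card ι) cR cP) ≤
      2 ^ Fintype.card ι * ENNReal.ofReal (cR * ∏ i, cP i) := by
  rw [normBox, Measure.prod_prod, Measure.pi_pi, real_volume_pi_setOf_norm_pow_card_le_eq hcR,
    ENNReal.ofReal_mul hcR, ENNReal.ofReal_prod_of_nonneg fun i _ => (hcP0 i).le, ← mul_assoc]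
  gcongr with i
  exact (padic_measure_pi_setOf_norm_pow_card_le (ρ i) (hcP0 i) (hcP1 i)).trans_eq (by simp [hρ])

theorem measure_badSet_le [Nonempty ι] (hpinj : Function.Injective p)
    (ν : ∀ i, Measure (ι → κ → ℚ_[p i])) [∀ i, SigmaFinite (ν i)]
    [∀ i, (ν i).IsAddLeftInvariant] (hν : ∀ i, ν i {A | ∀ a b, ‖A a b‖ ≤ 1} = 1)
    {q : κ → ℚ} (hq : ∀ b, q b ∈ sIntegers p) (hq0 : q ≠ 0) {cR : ℝ} {cP : Fin s → ℝ}
    (hcR : 0 ≤ cR) (hcP0 : ∀ i, 0 < cP i) (hcP1 : ∀ i, cP i ≤ 1) :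
    ((volume : Measure (ι → κ → ℝ)).prod (Measure.pi ν))
        (badSet p ι (Fintype.card ι) q cR cP) ≤
      2 ^ Fintype.card ι * ENNReal.ofReal (cR * ∏ i, cP i) := by
  choose ρ hρ hρ1 using fun i => exists_isAddHaarMeasure_closedBall_eq_one (ι → ℚ_[p i])
  have hball (i) : ρ i {y | ∀ j, ‖y j‖ ≤ 1} = 1 := by
    simp only [← hρ1 i, closedBall, dist_zero_right, pi_norm_le_iff_of_nonneg zero_le_one]
  have : ((volume : Measure (ι → κ → ℝ)).prod (Measure.pi ν)).IsAddLeftInvariant :=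
    Measure.prod.instIsAddLeftInvariant
  have : ((volume : Measure (ι → ℝ)).prod (Measure.pi ρ)).IsAddLeftInvariant :=
    Measure.prod.instIsAddLeftInvariant
  have hequi := measure_inter_preimage_iUnion_vadd_mul_le
    (isAddFundamentalDomain_coordBox hpinj (measurable_matEquiv p ι κ) 0
      ((volume : Measure (ι → κ → ℝ)).prod (Measure.pi ν)))
    (isAddFundamentalDomain_coordBox hpinj (measurable_vecEquiv p ι) 0
      ((volume : Measure (ι → ℝ)).prod (Measure.pi ρ)))
    (measurable_mulVecRat q) (mulVecRat_surjective hq0) (sLattice_le_comap_mulVecRat hq)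
    (measurableSet_normBox (Fintype.card ι) cR cP)
  rw [measure_coordBox_matEquiv 0 ν hν, measure_coordBox_vecEquiv 0 ρ hball, mul_one,
    one_mul] at hequi
  exact ((measure_mono (badSet_subset _ q cR cP)).trans hequi).trans
    (measure_normBox_le ρ hρ1 hcR hcP0 hcP1)

end BadSets

theorem ratR_ratP_mem_sLattice {n s : ℕ} {p : Fin s → ℕ} [∀ i, Fact (p i).Prime]
    {q : Fin n → ℚ} (hq : ∀ j, q j ∈ sIntegers p) :
    (ratR q, fun i => ratP p i q) ∈ sLattice (vecEquiv p (Fin n)) :=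
  mem_sLattice.2 ⟨fun j => ⟨q j, hq j⟩, fun _ => rfl⟩

theorem summable_bad_set_volumes_general {m n s : ℕ} (hm : 0 < m) {p : Fin s → ℕ}
    [∀ i, Fact (p i).Prime] (hpinj : Function.Injective p)
    [∀ i, MeasurableSpace ℚ_[p i]] [∀ i, BorelSpace ℚ_[p i]]
    {ψR : ℝ → ℝ} {ψP : Fin s → ℝ → ℝ} (hψR : IsApproximating ψR)
    (hψP : ∀ i, IsApproximating (ψP i))
    (μ : ∀ i, Measure (Fin n → ℚ_[p i])) [∀ i, SigmaFinite (μ i)]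
    [∀ i, (μ i).IsAddLeftInvariant] (hμ : ∀ i, μ i {y | ∀ j, ‖y j‖ ≤ 1} = 1)
    (ν : ∀ i, Measure (Fin m → Fin n → ℚ_[p i])) [∀ i, SigmaFinite (ν i)]
    [∀ i, (ν i).IsAddLeftInvariant] (hν : ∀ i, ν i {A | ∀ a b, ‖A a b‖ ≤ 1} = 1) :
    ∑' q : {q : Fin n → ℚ // (∀ j, IsZS (∏ i, p i) (q j)) ∧ q ≠ 0},
        ((volume : Measure (Fin m → Fin n → ℝ)).prod (Measure.pi ν))
          (badSet p (Fin m) m q.1 (ψR (‖ratR q.1‖ ^ n)) fun i => ψP i (‖ratP p i q.1‖ ^ n)) ≤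
      2 ^ m * (2 ^ n * ∫⁻ y, ENNReal.ofReal (approxProd ψR ψP n y)
        ∂((volume : Measure (Fin n → ℝ)).prod (Measure.pi μ))) := by
  have : Nonempty (Fin m) := Fin.pos_iff_nonempty.1 hm
  let g (q : {q : Fin n → ℚ // (∀ j, IsZS (∏ i, p i) (q j)) ∧ q ≠ 0}) :
      sLattice (vecEquiv p (Fin n)) := ⟨_, ratR_ratP_mem_sLattice q.2.1⟩
  have hg : Function.Injective g := fun q r hqr => Subtype.ext <| funext fun j =>
    Rat.cast_injective (congrFun (congrArg (fun y => y.1.1) hqr) j)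
  have hvol (q : {q : Fin n → ℚ // (∀ j, IsZS (∏ i, p i) (q j)) ∧ q ≠ 0}) :=
    measure_badSet_le hpinj ν hν q.2.1 q.2.2 (hψR.pos (‖ratR q.1‖ ^ n)).le
      (fun i => (hψP i).pos (‖ratP p i q.1‖ ^ n)) fun i => (hψP i).le_one _
  simp only [Fintype.card_fin] at hvol
  refine (ENNReal.tsum_le_tsum hvol).trans ?_
  rw [ENNReal.tsum_mul_left]
  gcongr
  refine (ENNReal.tsum_comp_le_tsum_of_injective hg
    fun y => ENNReal.ofReal (approxProd ψR ψP n y.1)).trans ?_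
  simpa only [Fintype.card_fin] using tsum_sLattice_approxProd_le hpinj hψR hψP n μ hμ

/-- **Summability of the bad-set volumes under convergence of the integral.**
If `∫_{ℚ_S^n} ∏_p ψ_p(‖y‖_p^n) dy < ∞`, then
`∑_{q ∈ ℤ_S^n ∖ {0}} vol(𝒜_q) < ∞`, where `𝒜_q` is the set of
`A ∈ Mat_{m,n}([0,1) × ∏_p ℤ_p)` for which there exists `p⃗ ∈ ℤ_S^m` with
`‖A_p q + p⃗‖_p^m ≤ ψ_p(‖q‖_p^n)` at every place `p ∈ S`. -/
theorem summable_bad_set_volumes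
    (m n : ℕ) (hm : 0 < m) (hn : 0 < n)
    (s : ℕ) (p : Fin s → ℕ) [∀ i, Fact (p i).Prime] (hpinj : Function.Injective p)
    [∀ i, MeasurableSpace ℚ_[p i]] [∀ i, BorelSpace ℚ_[p i]]
    (ψ : ApproxFamily m n s p)
    -- Haar measure on `ℚ_S^n`, normalized so that `ℤ_p^n` has measure one at each
    -- finite place:
    (μ : ∀ i, Measure (Fin n → ℚ_[p i])) [∀ i, (μ i).IsAddHaarMeasure]
    (hμ : ∀ i, μ i {y | ∀ j, ‖y j‖ ≤ 1} = 1)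
    -- Haar measure on `Mat_{m,n}(ℚ_S)`, normalized likewise:
    (ν : ∀ i, Measure (Fin m → Fin n → ℚ_[p i])) [∀ i, (ν i).IsAddHaarMeasure]
    (hν : ∀ i, ν i {A | ∀ a b, ‖A a b‖ ≤ 1} = 1)
    -- convergence of the integral `∫_{ℚ_S^n} ∏_p ψ_p(‖y‖_p^n) dy`:
    (hint : ∫⁻ y : (Fin n → ℝ) × (∀ i, Fin n → ℚ_[p i]),
        ENNReal.ofReal (ψ.psiR (‖y.1‖ ^ n) * ∏ i, ψ.psiP i (‖y.2 i‖ ^ n))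
        ∂((volume : Measure (Fin n → ℝ)).prod (Measure.pi μ)) < ⊤) :
    ∑' q : {q : Fin n → ℚ // (∀ j, IsZS (∏ i, p i) (q j)) ∧ q ≠ 0},
      ((volume : Measure (Fin m → Fin n → ℝ)).prod (Measure.pi ν))
        {A : (Fin m → Fin n → ℝ) × (∀ i, Fin m → Fin n → ℚ_[p i]) |
          (∀ a b, 0 ≤ A.1 a b ∧ A.1 a b < 1) ∧ (∀ i a b, ‖A.2 i a b‖ ≤ 1) ∧
          ∃ pv : Fin m → ℚ, (∀ a, IsZS (∏ i, p i) (pv a)) ∧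
            ‖fun a => (∑ b, A.1 a b * ((q : Fin n → ℚ) b : ℝ)) + (pv a : ℝ)‖ ^ m
              ≤ ψ.psiR (‖ratR (q : Fin n → ℚ)‖ ^ n) ∧
            ∀ i, ‖fun a => (∑ b, A.2 i a b * (((q : Fin n → ℚ) b : ℚ) : ℚ_[p i]))
                + ((pv a : ℚ) : ℚ_[p i])‖ ^ m
              ≤ ψ.psiP i (‖ratP p i (q : Fin n → ℚ)‖ ^ n)}
      < ⊤ :=
  (summable_bad_set_volumes_general hm hpinj ψ.isApproximating_psiR ψ.isApproximating_psiP
    μ hμ ν hν).trans_lt (ENNReal.mul_lt_top (by simp) (ENNReal.mul_lt_top (by simp) hint))
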